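/- arXiv:math/0502056 — 2 statements merged into one kernel-verified Lean document; each statement's English description precedes it below -/
import Mathlib

section
/- Consider SO(n)/SO(2)×SO(n−3) as a 6-symmetric space with canonical f-structure f₄ = (1/√3)(θ² − θ⁴). For no pair s, t > 0 does f₄ satisfy the NKf condition for (s,t); that is, for every s, t > 0 there exists X ∈ 𝔪 with (1/2)[f₄X, f₄²X]_𝔪 + U_{s,t}(f₄X, f₄²X) − f₄(U_{s,t}(f₄X, f₄X)) ≠ 0. In other words, f₄ is not a nearly Kähler f-structure with respect to any invariant Riemannian metric. -/
open Matrix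

namespace FlagMfld

variable {n : ℕ}

/-- Membership in `so(n)`: real skew-symmetric `n×n` matrices. -/
def inSO (X : Matrix (Fin n) (Fin n) ℝ) : Prop := Xᵀ = -X

/-- The isotropy subalgebra `𝔥 ≅ so(2) ⊕ so(n-3)`: skew matrices whose only (possibly)
nonzero entries are `H₂₃`, `H₃₂` and `H_{ij}` with `i,j ≥ 4` (1-based indexing; indices are
0-based in the formalization, so the allowed positions are `(1,2)`, `(2,1)` and `i,j ≥ 3`). -/
def inH (X : Matrix (Fin n) (Fin n) ℝ) : Prop :=
  Xᵀ = -X ∧ ∀ i j : Fin n, X i j ≠ 0 →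
    (i.val = 1 ∧ j.val = 2) ∨ (i.val = 2 ∧ j.val = 1) ∨ (3 ≤ i.val ∧ 3 ≤ j.val)

/-- The canonical reductive complement `𝔪`: skew matrices with `S₂₃ = 0` and `S_{ij} = 0`
for all `i,j ≥ 4` (1-based). -/
def inM (X : Matrix (Fin n) (Fin n) ℝ) : Prop :=
  Xᵀ = -X ∧ (∀ i j : Fin n, i.val = 1 → j.val = 2 → X i j = 0) ∧
    ∀ i j : Fin n, 3 ≤ i.val → 3 ≤ j.val → X i j = 0

/-- `𝔪₁`: only `S₁₂`, `S₁₃` (and skew partners) may be nonzero. -/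
def inM1 (X : Matrix (Fin n) (Fin n) ℝ) : Prop :=
  Xᵀ = -X ∧ ∀ i j : Fin n, X i j ≠ 0 →
    (i.val = 0 ∧ (j.val = 1 ∨ j.val = 2)) ∨ (j.val = 0 ∧ (i.val = 1 ∨ i.val = 2))

/-- `𝔪₂`: only `S_{2j}`, `S_{3j}` for `j ≥ 4` (and skew partners) may be nonzero. -/
def inM2 (X : Matrix (Fin n) (Fin n) ℝ) : Prop :=
  Xᵀ = -X ∧ ∀ i j : Fin n, X i j ≠ 0 →
    ((i.val = 1 ∨ i.val = 2) ∧ 3 ≤ j.val) ∨ ((j.val = 1 ∨ j.val = 2) ∧ 3 ≤ i.val)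

/-- `𝔪₃`: only `S_{1j}` for `j ≥ 4` (and skew partners) may be nonzero. -/
def inM3 (X : Matrix (Fin n) (Fin n) ℝ) : Prop :=
  Xᵀ = -X ∧ ∀ i j : Fin n, X i j ≠ 0 →
    (i.val = 0 ∧ 3 ≤ j.val) ∨ (j.val = 0 ∧ 3 ≤ i.val)

/-- Component along `𝔪₁` of the decomposition `𝔪 = 𝔪₁ ⊕ 𝔪₂ ⊕ 𝔪₃` (entrywise). -/
def p1 (X : Matrix (Fin n) (Fin n) ℝ) : Matrix (Fin n) (Fin n) ℝ :=
  Matrix.of fun i j =>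
    if (i.val = 0 ∧ (j.val = 1 ∨ j.val = 2)) ∨ (j.val = 0 ∧ (i.val = 1 ∨ i.val = 2))
    then X i j else 0

/-- Component along `𝔪₂`. -/
def p2 (X : Matrix (Fin n) (Fin n) ℝ) : Matrix (Fin n) (Fin n) ℝ :=
  Matrix.of fun i j =>
    if ((i.val = 1 ∨ i.val = 2) ∧ 3 ≤ j.val) ∨ ((j.val = 1 ∨ j.val = 2) ∧ 3 ≤ i.val)
    then X i j else 0

/-- Component along `𝔪₃`. -/
def p3 (X : Matrix (Fin n) (Fin n) ℝ) : Matrix (Fin n) (Fin n) ℝ :=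
  Matrix.of fun i j =>
    if (i.val = 0 ∧ 3 ≤ j.val) ∨ (j.val = 0 ∧ 3 ≤ i.val) then X i j else 0

/-- Projection of `so(n)` onto `𝔪` along `𝔥` (kills the entries at `𝔥`-positions). -/
def pM (X : Matrix (Fin n) (Fin n) ℝ) : Matrix (Fin n) (Fin n) ℝ :=
  Matrix.of fun i j =>
    if (i.val = 1 ∧ j.val = 2) ∨ (i.val = 2 ∧ j.val = 1) ∨ (3 ≤ i.val ∧ 3 ≤ j.val)
    then 0 else X i j

/-- Matrix commutator `[X,Y] = XY - YX`. -/
def br (X Y : Matrix (Fin n) (Fin n) ℝ) : Matrix (Fin n) (Fin n) ℝ := X * Y - Y * X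

/-- The naturally reductive metric `g₀(X,Y) = (n-1)·Tr(XᵀY)`. -/
noncomputable def g0 (X Y : Matrix (Fin n) (Fin n) ℝ) : ℝ :=
  ((n : ℝ) - 1) * (Xᵀ * Y).trace

/-- The invariant metric with characteristic numbers `(s,t)`:
`g_{s,t}(X,Y) = g₀(X₁,Y₁) + s·g₀(X₂,Y₂) + t·g₀(X₃,Y₃)`. -/
noncomputable def gst (s t : ℝ) (X Y : Matrix (Fin n) (Fin n) ℝ) : ℝ :=
  g0 (p1 X) (p1 Y) + s * g0 (p2 X) (p2 Y) + t * g0 (p3 X) (p3 Y)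

/-- The symmetric part `U_{s,t}` of the Nomizu function of the Levi-Civita connection of
`g_{s,t}`. -/
noncomputable def Ust (s t : ℝ) (X Y : Matrix (Fin n) (Fin n) ℝ) :
    Matrix (Fin n) (Fin n) ℝ :=
  ((t - s) / 2) • (br (p2 X) (p3 Y) + br (p2 Y) (p3 X)) +
  ((t - 1) / (2 * s)) • (br (p1 X) (p3 Y) + br (p1 Y) (p3 X)) +
  ((s - 1) / (2 * t)) • (br (p1 X) (p2 Y) + br (p1 Y) (p2 X))

/-- The block-diagonal matrix `B₄ = diag(1, [[0,1],[-1,0]], -1, …, -1)`. -/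
def B4 : Matrix (Fin n) (Fin n) ℝ :=
  Matrix.of fun i j =>
    if i.val = 0 ∧ j.val = 0 then 1
    else if i.val = 1 ∧ j.val = 2 then 1
    else if i.val = 2 ∧ j.val = 1 then -1
    else if 3 ≤ i.val ∧ i = j then -1
    else 0

/-- `θ = dΦ|𝔪` for the order-4 automorphism: `θ(X) = B₄ X B₄ᵀ`. -/
def th4 (X : Matrix (Fin n) (Fin n) ℝ) : Matrix (Fin n) (Fin n) ℝ := B4 * X * B4ᵀ

/-- The canonical f-structure `f₀ = (1/2)(θ - θ³)` of the 4-symmetric space. -/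
noncomputable def f0 (X : Matrix (Fin n) (Fin n) ℝ) : Matrix (Fin n) (Fin n) ℝ :=
  (1 / 2 : ℝ) • (th4 X - th4 (th4 (th4 X)))

/-- The block-diagonal matrix `B₆ = diag(1, [[1/2,√3/2],[-√3/2,1/2]], -1, …, -1)`. -/
noncomputable def B6 : Matrix (Fin n) (Fin n) ℝ :=
  Matrix.of fun i j =>
    if i.val = 0 ∧ j.val = 0 then 1
    else if i.val = 1 ∧ j.val = 1 then 1 / 2
    else if i.val = 1 ∧ j.val = 2 then Real.sqrt 3 / 2
    else if i.val = 2 ∧ j.val = 1 then -(Real.sqrt 3 / 2)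
    else if i.val = 2 ∧ j.val = 2 then 1 / 2
    else if 3 ≤ i.val ∧ i = j then -1
    else 0

/-- `θ = dΦ|𝔪` for the order-6 automorphism: `θ(X) = B₆ X B₆ᵀ`. -/
noncomputable def th6 (X : Matrix (Fin n) (Fin n) ℝ) : Matrix (Fin n) (Fin n) ℝ :=
  B6 * X * B6ᵀ

/-- `f₁ = (1/√3)(θ - θ⁵)`. -/
noncomputable def f1 (X : Matrix (Fin n) (Fin n) ℝ) : Matrix (Fin n) (Fin n) ℝ :=
  (1 / Real.sqrt 3) • (th6 X - th6 (th6 (th6 (th6 (th6 X)))))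

/-- `f₂ = (1/(2√3))(θ - θ² + θ⁴ - θ⁵)`. -/
noncomputable def f2 (X : Matrix (Fin n) (Fin n) ℝ) : Matrix (Fin n) (Fin n) ℝ :=
  (1 / (2 * Real.sqrt 3)) •
    (th6 X - th6 (th6 X) + th6 (th6 (th6 (th6 X))) - th6 (th6 (th6 (th6 (th6 X)))))

/-- `f₃ = (1/(2√3))(θ + θ² - θ⁴ - θ⁵)`. -/
noncomputable def f3 (X : Matrix (Fin n) (Fin n) ℝ) : Matrix (Fin n) (Fin n) ℝ :=
  (1 / (2 * Real.sqrt 3)) •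
    (th6 X + th6 (th6 X) - th6 (th6 (th6 (th6 X))) - th6 (th6 (th6 (th6 (th6 X)))))

/-- `f₄ = (1/√3)(θ² - θ⁴)`. -/
noncomputable def f4 (X : Matrix (Fin n) (Fin n) ℝ) : Matrix (Fin n) (Fin n) ℝ :=
  (1 / Real.sqrt 3) • (th6 (th6 X) - th6 (th6 (th6 (th6 X))))

/-- The Killing f-structure condition for `f` w.r.t. the metric with characteristic
numbers `(s,t)`: `(1/2)[X, fX]_𝔪 + U_{s,t}(X, fX) - f(U_{s,t}(X,X)) = 0` for all `X ∈ 𝔪`. -/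
def killCond (s t : ℝ) (f : Matrix (Fin n) (Fin n) ℝ → Matrix (Fin n) (Fin n) ℝ) : Prop :=
  ∀ X : Matrix (Fin n) (Fin n) ℝ, inM X →
    (1 / 2 : ℝ) • pM (br X (f X)) + Ust s t X (f X) - f (Ust s t X X) = 0

/-- The nearly Kähler f-structure condition:
`(1/2)[fX, f²X]_𝔪 + U_{s,t}(fX, f²X) - f(U_{s,t}(fX, fX)) = 0` for all `X ∈ 𝔪`. -/
def nkCond (s t : ℝ) (f : Matrix (Fin n) (Fin n) ℝ → Matrix (Fin n) (Fin n) ℝ) : Prop :=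
  ∀ X : Matrix (Fin n) (Fin n) ℝ, inM X →
    (1 / 2 : ℝ) • pM (br (f X) (f (f X))) + Ust s t (f X) (f (f X)) -
      f (Ust s t (f X) (f X)) = 0

/-- The `G₁f` condition:
`f(2·U_{s,t}(fX, f²X) - f(U_{s,t}(fX, fX)) + f(U_{s,t}(f²X, f²X))) = 0` for all `X ∈ 𝔪`. -/
def g1Cond (s t : ℝ) (f : Matrix (Fin n) (Fin n) ℝ → Matrix (Fin n) (Fin n) ℝ) : Prop :=
  ∀ X : Matrix (Fin n) (Fin n) ℝ, inM X →
    f ((2 : ℝ) • Ust s t (f X) (f (f X)) - f (Ust s t (f X) (f X)) +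
      f (Ust s t (f (f X)) (f (f X)))) = 0

end FlagMfld

open FlagMfld

/-!
Let `J` span the `so(2)`-factor of `𝔥`. The key fact is `f₄ = ad J` on `so(n)`. Consequently `f₄`
is a derivation which vanishes on `𝔪₃` and preserves `𝔪₁` and `𝔪₂`. Take `Y = f₄ X` with components
`x ∈ 𝔪₁`, `y ∈ 𝔪₂`, and write `Jx` for `[J, x]`. Since `[𝔪₁, 𝔪₂] ⊆ 𝔪₃` is killed by `f₄`, we get
`[x, Jy] + [Jx, y] = J[x, y] = 0`. So `U(Y, f₄ Y)` and `f₄ (U(Y, Y))` both vanish, whatever the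
coefficients of `U`, while `½ [Y, f₄ Y]_𝔪 = ½ ([x, Jy] - [Jx, y])` is equal to `[x, Jy]`, which is
nonzero for suitable `x` and `y`.
-/

namespace FlagMfld

attribute [local instance] LieRing.ofAssociativeRing

section SkewMatrix

variable {ι : Type*}

lemma apply_eq_neg_of_skew {R : Type*} [Neg R] {X : Matrix ι ι R} (hX : Xᵀ = -X) (i j : ι) :
    X j i = -X i j :=
  congrFun₂ hX i j

lemma apply_self_of_skew {X : Matrix ι ι ℝ} (hX : Xᵀ = -X) (i : ι) : X i i = 0 :=
  self_eq_neg.mp (apply_eq_neg_of_skew hX i i)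

lemma transpose_lie_of_skew {R : Type*} [Fintype ι] [CommRing R] {X Y : Matrix ι ι R}
    (hX : Xᵀ = -X) (hY : Yᵀ = -Y) : ⁅X, Y⁆ᵀ = -⁅X, Y⁆ := by
  simp [hX, hY, Ring.lie_def]

lemma exists_ne_zero_of_lie_apply_ne_zero {R : Type*} [Fintype ι] [Ring R] {X Y : Matrix ι ι R}
    {i j : ι} (h : ⁅X, Y⁆ i j ≠ 0) :
    ∃ k, (X i k ≠ 0 ∧ Y k j ≠ 0) ∨ (Y i k ≠ 0 ∧ X k j ≠ 0) := by
  contrapose! h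
  have hXY (k) : X i k * Y k j = 0 := by
    by_cases hk : X i k = 0
    · rw [hk, zero_mul]
    · rw [(h k).1 hk, mul_zero]
  have hYX (k) : Y i k * X k j = 0 := by
    by_cases hk : Y i k = 0
    · rw [hk, zero_mul]
    · rw [(h k).2 hk, mul_zero]
  simp [Ring.lie_def, Matrix.sub_apply, mul_apply, hXY, hYX]

/-- Skew-symmetric matrices whose nonzero entries lie in the positions `S`. The subspaces `𝔥`,
`𝔪₁`, `𝔪₂` and `𝔪₃` all have this form, so their bracket relations reduce to combinatorics of
positions. -/
def SkewSupportedOn (S : ι → ι → Prop) (X : Matrix ι ι ℝ) : Prop :=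
  Xᵀ = -X ∧ ∀ i j, X i j ≠ 0 → S i j

namespace SkewSupportedOn

variable {S T P : ι → ι → Prop} {X Y : Matrix ι ι ℝ}

lemma apply_eq_zero (hX : SkewSupportedOn S X) {i j : ι} (h : ¬S i j) : X i j = 0 :=
  not_not.mp (mt (hX.2 i j) h)

lemma mono (hX : SkewSupportedOn S X) (h : ∀ i j, S i j → T i j) : SkewSupportedOn T X :=
  ⟨hX.1, fun i j hij => h i j (hX.2 i j hij)⟩

lemma smul (hX : SkewSupportedOn S X) (c : ℝ) : SkewSupportedOn S (c • X) :=
  ⟨by rw [transpose_smul, hX.1, smul_neg], fun i j h => hX.2 i j fun h₀ => h (by simp [h₀])⟩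

lemma add (hX : SkewSupportedOn S X) (hY : SkewSupportedOn T Y) :
    SkewSupportedOn (fun i j => S i j ∨ T i j) (X + Y) := by
  refine ⟨by rw [transpose_add, hX.1, hY.1, neg_add], fun i j h => ?_⟩
  contrapose! h
  rw [Matrix.add_apply, hX.apply_eq_zero h.1, hY.apply_eq_zero h.2, add_zero]

lemma lie [Fintype ι] (hX : SkewSupportedOn S X) (hY : SkewSupportedOn T Y)
    (h : ∀ i j k, i ≠ j → (S i k ∧ T k j) ∨ (T i k ∧ S k j) → P i j) :
    SkewSupportedOn P ⁅X, Y⁆ := by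
  have hskew := transpose_lie_of_skew hX.1 hY.1
  refine ⟨hskew, fun i j hne => ?_⟩
  have hij : i ≠ j := by
    rintro rfl
    exact hne (apply_self_of_skew hskew i)
  obtain ⟨k, hk⟩ := exists_ne_zero_of_lie_apply_ne_zero hne
  exact h i j k hij (hk.imp (.imp (hX.2 i k) (hY.2 k j)) (.imp (hY.2 i k) (hX.2 k j)))

end SkewSupportedOn

end SkewMatrix

section SkewUnit

variable {ι R : Type*} [DecidableEq ι] [CommRing R]

/-- The standard basis element `E_{ij} - E_{ji}` of the Lie algebra of skew-symmetric matrices. -/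
def skewUnit (R : Type*) [CommRing R] (i j : ι) : Matrix ι ι R := single i j 1 - single j i 1

lemma transpose_skewUnit (i j : ι) : (skewUnit R i j)ᵀ = -skewUnit R i j := by
  simp [skewUnit]

lemma neg_skewUnit (i j : ι) : -skewUnit R i j = skewUnit R j i := by
  simp [skewUnit]

lemma skewUnit_apply_of_ne {i j : ι} (hij : i ≠ j) : skewUnit R i j i j = 1 := by
  simp [skewUnit, hij]

lemma skewSupportedOn_skewUnit (i j : ι) :
    SkewSupportedOn (fun k l => (k = i ∧ l = j) ∨ (k = j ∧ l = i)) (skewUnit ℝ i j) := by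
  refine ⟨transpose_skewUnit i j, fun k l h => ?_⟩
  contrapose! h
  have hij : ¬(i = k ∧ j = l) := fun ⟨hk, hl⟩ => h.1 hk.symm hl.symm
  have hji : ¬(j = k ∧ i = l) := fun ⟨hk, hl⟩ => h.2 hk.symm hl.symm
  simp [skewUnit, single_apply_of_ne, hij, hji]

variable [Fintype ι] {i j k : ι}

lemma lie_skewUnit_skewUnit (hij : i ≠ j) (hjk : j ≠ k) (hik : i ≠ k) :
    ⁅skewUnit R i j, skewUnit R j k⁆ = skewUnit R i k := by
  simp [skewUnit, Ring.lie_def, mul_sub, sub_mul, hij, hij.symm, hjk, hjk.symm, hik, hik.symm]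

lemma lie_skewUnit_skewUnit_swap (hij : i ≠ j) (hjk : j ≠ k) (hik : i ≠ k) :
    ⁅skewUnit R j k, skewUnit R i j⁆ = skewUnit R k i := by
  rw [← lie_skew, lie_skewUnit_skewUnit hij hjk hik, neg_skewUnit]

lemma lie_skewUnit_skewUnit_of_left (hij : i ≠ j) (hjk : j ≠ k) (hik : i ≠ k) :
    ⁅skewUnit R i j, skewUnit R i k⁆ = skewUnit R k j := by
  rw [← neg_skewUnit j i, neg_lie, lie_skewUnit_skewUnit hij.symm hik hjk, neg_skewUnit]

lemma skewUnit_mul_mul_skewUnit {X : Matrix ι ι ℝ} (hX : Xᵀ = -X) (i j : ι) :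
    skewUnit ℝ i j * X * skewUnit ℝ i j = X j i • skewUnit ℝ i j := by
  simp [skewUnit, mul_sub, sub_mul, single_mul_mul_single, apply_self_of_skew hX, smul_sub,
    smul_single, apply_eq_neg_of_skew hX j i, single_neg]

lemma skewUnit_mul_self (hij : i ≠ j) :
    skewUnit R i j * skewUnit R i j = -(single i i 1 + single j j 1) := by
  simp only [skewUnit, mul_sub, sub_mul, single_mul_single_same, mul_one, ne_eq, hij, hij.symm,
    not_false_eq_true, single_mul_single_of_ne]
  abel

lemma skewUnit_pow_three (hij : i ≠ j) :
    skewUnit R i j * skewUnit R i j * skewUnit R i j = -skewUnit R i j := by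
  rw [skewUnit_mul_self hij, neg_mul, neg_inj]
  simp [skewUnit, mul_sub, add_mul, hij, hij.symm]

end SkewUnit

variable {n : ℕ}

lemma br_eq_lie (X Y : Matrix (Fin n) (Fin n) ℝ) : br X Y = ⁅X, Y⁆ := rfl

section Decomposition

variable {H X X' Y Y' Z : Matrix (Fin n) (Fin n) ℝ}

lemma inM1_lie (hH : inH H) (hX : inM1 X) : inM1 ⁅H, X⁆ :=
  SkewSupportedOn.lie hH hX fun _ _ _ _ => by omega

lemma inM2_lie (hH : inH H) (hY : inM2 Y) : inM2 ⁅H, Y⁆ :=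
  SkewSupportedOn.lie hH hY fun _ _ _ _ => by omega

lemma inM3_lie (hX : inM1 X) (hY : inM2 Y) : inM3 ⁅X, Y⁆ :=
  SkewSupportedOn.lie hX hY fun _ _ _ _ => by omega

lemma inH_lie_of_inM1 (hX : inM1 X) (hX' : inM1 X') : inH ⁅X, X'⁆ :=
  SkewSupportedOn.lie hX hX' fun _ _ _ _ => by omega

lemma inH_lie_of_inM2 (hY : inM2 Y) (hY' : inM2 Y') : inH ⁅Y, Y'⁆ :=
  SkewSupportedOn.lie hY hY' fun _ _ _ _ => by omega

lemma inM_add (hX : inM1 X) (hY : inM2 Y) : inM (X + Y) := by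
  have hXY := SkewSupportedOn.add hX hY
  exact ⟨hXY.1, fun _ _ _ _ => hXY.apply_eq_zero (by omega),
    fun _ _ _ _ => hXY.apply_eq_zero (by omega)⟩

lemma inM1_skewUnit {i j : Fin n} (hi : i.val = 0) (hj : j.val = 1 ∨ j.val = 2) :
    inM1 (skewUnit ℝ i j) :=
  (skewSupportedOn_skewUnit i j).mono fun k l h => by
    simp only [Fin.ext_iff] at h
    omega

lemma inM2_skewUnit {i j : Fin n} (hi : i.val = 1 ∨ i.val = 2) (hj : 3 ≤ j.val) :
    inM2 (skewUnit ℝ i j) :=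
  (skewSupportedOn_skewUnit i j).mono fun k l h => by
    simp only [Fin.ext_iff] at h
    omega

lemma p1_add (hX : inM1 X) (hY : inM2 Y) : p1 (X + Y) = X := by
  ext i j
  rw [p1, of_apply, Matrix.add_apply]
  split_ifs with h
  · rw [SkewSupportedOn.apply_eq_zero hY (by omega), add_zero]
  · rw [SkewSupportedOn.apply_eq_zero hX h]

lemma p2_add (hX : inM1 X) (hY : inM2 Y) : p2 (X + Y) = Y := by
  ext i j
  rw [p2, of_apply, Matrix.add_apply]
  split_ifs with h
  · rw [SkewSupportedOn.apply_eq_zero hX (by omega), zero_add]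
  · rw [SkewSupportedOn.apply_eq_zero hY h]

lemma p3_add (hX : inM1 X) (hY : inM2 Y) : p3 (X + Y) = 0 := by
  ext i j
  rw [p3, of_apply, Matrix.add_apply]
  split_ifs with h
  · rw [SkewSupportedOn.apply_eq_zero hX (by omega), SkewSupportedOn.apply_eq_zero hY (by omega),
      add_zero, Matrix.zero_apply]
  · rw [Matrix.zero_apply]

lemma pM_add (X Y : Matrix (Fin n) (Fin n) ℝ) : pM (X + Y) = pM X + pM Y := by
  ext i j
  simp only [pM, of_apply, Matrix.add_apply]
  split_ifs
  · rw [add_zero]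
  · rfl

lemma pM_eq_zero_of_inH (hH : inH H) : pM H = 0 := by
  ext i j
  rw [pM, of_apply, Matrix.zero_apply]
  split_ifs with h
  · rfl
  · exact SkewSupportedOn.apply_eq_zero hH h

lemma pM_eq_self_of_inM3 (hZ : inM3 Z) : pM Z = Z := by
  ext i j
  rw [pM, of_apply]
  split_ifs with h
  · rw [SkewSupportedOn.apply_eq_zero hZ (by omega)]
  · rfl

lemma pM_lie_add_add (hX : inM1 X) (hY : inM2 Y) (hX' : inM1 X') (hY' : inM2 Y') :
    pM ⁅X + Y, X' + Y'⁆ = ⁅X, Y'⁆ - ⁅X', Y⁆ := by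
  rw [add_lie, lie_add, lie_add, ← lie_skew Y X', pM_add, pM_add, pM_add,
    pM_eq_zero_of_inH (inH_lie_of_inM1 hX hX'), pM_eq_zero_of_inH (inH_lie_of_inM2 hY hY'),
    pM_eq_self_of_inM3 (inM3_lie hX hY'), ← neg_one_smul ℝ ⁅X', Y⁆,
    pM_eq_self_of_inM3 (SkewSupportedOn.smul (inM3_lie hX' hY) _)]
  module

/-- The general shape of the symmetric part of a Nomizu function on `𝔪 = 𝔪₁ ⊕ 𝔪₂ ⊕ 𝔪₃`:
`U_{s,t}` is the case `a = (t-s)/2`, `b = (t-1)/(2s)`, `c = (s-1)/(2t)`. -/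
def symmU (a b c : ℝ) (X Y : Matrix (Fin n) (Fin n) ℝ) : Matrix (Fin n) (Fin n) ℝ :=
  a • (br (p2 X) (p3 Y) + br (p2 Y) (p3 X)) +
  b • (br (p1 X) (p3 Y) + br (p1 Y) (p3 X)) +
  c • (br (p1 X) (p2 Y) + br (p1 Y) (p2 X))

lemma symmU_add_add (hX : inM1 X) (hY : inM2 Y) (hX' : inM1 X') (hY' : inM2 Y') (a b c : ℝ) :
    symmU a b c (X + Y) (X' + Y') = c • (⁅X, Y'⁆ + ⁅X', Y⁆) := by
  simp only [symmU, br_eq_lie, p1_add hX hY, p2_add hX hY, p3_add hX hY, p1_add hX' hY',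
    p2_add hX' hY', p3_add hX' hY', lie_zero, add_zero, smul_zero, zero_add]

end Decomposition

section InfinitesimalRotation

/-- The generator `J` of the `so(2)`-factor of `𝔥`, acting on the rows `2`, `3` (1-based). -/
def so2Gen (hn : 3 ≤ n) : Matrix (Fin n) (Fin n) ℝ := skewUnit ℝ ⟨1, by omega⟩ ⟨2, by omega⟩

lemma so2Gen_pow_three (hn : 3 ≤ n) : so2Gen hn * so2Gen hn * so2Gen hn = -so2Gen hn :=
  skewUnit_pow_three (by simp)

lemma so2Gen_mul_self (hn : 3 ≤ n) :
    so2Gen hn * so2Gen hn =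
      -(single ⟨1, by omega⟩ ⟨1, by omega⟩ 1 + single ⟨2, by omega⟩ ⟨2, by omega⟩ 1) :=
  skewUnit_mul_self (by simp)

lemma inH_so2Gen (hn : 3 ≤ n) : inH (so2Gen hn) :=
  (skewSupportedOn_skewUnit _ _).mono fun i j h => by
    simp only [Fin.ext_iff] at h
    omega

lemma lie_so2Gen_of_inM3 (hn : 3 ≤ n) {Z : Matrix (Fin n) (Fin n) ℝ} (hZ : inM3 Z) :
    ⁅so2Gen hn, Z⁆ = 0 := by
  have h : SkewSupportedOn (fun _ _ => False) ⁅so2Gen hn, Z⁆ :=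
    SkewSupportedOn.lie (skewSupportedOn_skewUnit _ _) hZ fun i j k _ h => by
      simp only [Fin.ext_iff] at h
      omega
  ext i j
  exact h.apply_eq_zero not_false

/-- The diagonal part of `B₆`. -/
noncomputable def B6Diag : Matrix (Fin n) (Fin n) ℝ :=
  diagonal fun i => if i.val = 0 then 1 else if i.val ≤ 2 then 1 / 2 else -1

lemma B6_eq (hn : 3 ≤ n) : B6 = B6Diag + (√3 / 2) • so2Gen hn := by
  ext i j
  simp only [B6, B6Diag, so2Gen, skewUnit, of_apply, Matrix.add_apply, Matrix.smul_apply,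
    Matrix.sub_apply, diagonal_apply, single_apply, Fin.ext_iff, smul_eq_mul]
  split_ifs <;> first | omega | simp

lemma B6Diag_mul_so2Gen (hn : 3 ≤ n) : B6Diag * so2Gen hn = (1 / 2 : ℝ) • so2Gen hn := by
  ext i j
  simp only [B6Diag, so2Gen, skewUnit, diagonal_mul, Matrix.sub_apply, Matrix.smul_apply,
    single_apply, Fin.ext_iff, smul_eq_mul]
  split_ifs <;> first | omega | simp

lemma so2Gen_mul_B6Diag (hn : 3 ≤ n) : so2Gen hn * B6Diag = (1 / 2 : ℝ) • so2Gen hn := by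
  ext i j
  simp only [B6Diag, so2Gen, skewUnit, mul_diagonal, Matrix.sub_apply, Matrix.smul_apply,
    single_apply, Fin.ext_iff, smul_eq_mul]
  split_ifs <;> first | omega | simp

lemma B6Diag_mul_self (hn : 3 ≤ n) :
    (B6Diag * B6Diag : Matrix (Fin n) (Fin n) ℝ) =
      1 + (3 / 4 : ℝ) • (so2Gen hn * so2Gen hn) := by
  ext i j
  simp only [B6Diag, diagonal_mul_diagonal, so2Gen_mul_self, Matrix.add_apply, Matrix.smul_apply,
    Matrix.neg_apply, diagonal_apply, one_apply, single_apply, Fin.ext_iff, smul_eq_mul]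
  split_ifs <;> first | omega | norm_num

lemma half_sqrt_three_mul_self : √3 / 2 * (√3 / 2) = 3 / 4 := by
  have h : √3 * √3 = 3 := Real.mul_self_sqrt (by norm_num)
  linear_combination h / 4

lemma B6_sq (hn : 3 ≤ n) : B6 * B6 =
    1 + (3 / 2 : ℝ) • (so2Gen hn * so2Gen hn) + (√3 / 2) • so2Gen hn := by
  rw [B6_eq hn, add_mul, mul_add, mul_add, smul_mul_assoc, mul_smul_comm, smul_mul_smul_comm,
    B6Diag_mul_self hn, B6Diag_mul_so2Gen, so2Gen_mul_B6Diag, half_sqrt_three_mul_self]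
  module

lemma B6_pow_four (hn : 3 ≤ n) : B6 * B6 * (B6 * B6) =
    1 + (3 / 2 : ℝ) • (so2Gen hn * so2Gen hn) - (√3 / 2) • so2Gen hn := by
  have hJ : so2Gen hn * (so2Gen hn * so2Gen hn) = -so2Gen hn := by
    rw [← mul_assoc, so2Gen_pow_three]
  simp only [B6_sq hn, add_mul, mul_add, one_mul, mul_one, smul_mul_assoc, mul_smul_comm, smul_add,
    smul_neg, smul_smul, mul_assoc, hJ, mul_neg, half_sqrt_three_mul_self]
  module

lemma transpose_B6_sq (hn : 3 ≤ n) :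
    (B6 * B6)ᵀ = (B6 * B6 * (B6 * B6) : Matrix (Fin n) (Fin n) ℝ) := by
  have hJ : (so2Gen hn)ᵀ = -so2Gen hn := transpose_skewUnit _ _
  rw [B6_pow_four hn, B6_sq hn]
  simp [hJ, sub_eq_add_neg]

lemma th6_th6 (X : Matrix (Fin n) (Fin n) ℝ) : th6 (th6 X) = B6 * B6 * X * (B6 * B6)ᵀ := by
  simp only [th6, transpose_mul, Matrix.mul_assoc]

lemma th6_pow_four (hn : 3 ≤ n) (X : Matrix (Fin n) (Fin n) ℝ) :
    th6 (th6 (th6 (th6 X))) = B6 * B6 * (B6 * B6) * X * (B6 * B6) := by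
  have hB : (B6 * B6 * (B6 * B6))ᵀ = (B6 * B6 : Matrix (Fin n) (Fin n) ℝ) := by
    rw [← transpose_B6_sq hn, transpose_transpose]
  rw [← congrArg (B6 * B6 * (B6 * B6) * X * ·) hB, th6_th6 (th6 (th6 X)), th6_th6 X]
  simp only [transpose_mul, Matrix.mul_assoc]

lemma f4_eq_lie (hn : 3 ≤ n) {X : Matrix (Fin n) (Fin n) ℝ} (hX : Xᵀ = -X) :
    f4 X = ⁅so2Gen hn, X⁆ := by
  set J := so2Gen hn
  have hcomm : J * X * (J * J) = J * J * X * J := by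
    have hJXJ : J * X * J = X ⟨2, by omega⟩ ⟨1, by omega⟩ • J := skewUnit_mul_mul_skewUnit hX _ _
    rw [← mul_assoc, hJXJ, mul_assoc J J X, mul_assoc J (J * X) J, hJXJ, smul_mul_assoc,
      mul_smul_comm]
  calc f4 X
      = (1 / √3) • (B6 * B6 * X * (B6 * B6 * (B6 * B6)) - B6 * B6 * (B6 * B6) * X * (B6 * B6)) := by
        rw [f4, th6_pow_four hn, th6_th6, transpose_B6_sq hn]
    _ = (1 / √3 * √3) • (J * X - X * J + (3 / 2 : ℝ) • (J * X * (J * J) - J * J * X * J)) := by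
        rw [B6_pow_four hn, B6_sq hn]
        simp only [add_mul, sub_mul, mul_add, mul_sub, one_mul, mul_one, smul_mul_assoc,
          mul_smul_comm, mul_assoc, J]
        module
    _ = ⁅J, X⁆ := by
        rw [one_div_mul_cancel (by positivity), hcomm, sub_self, smul_zero, add_zero, one_smul,
          Ring.lie_def]

lemma f4_eq_lie_add_lie (hn : 3 ≤ n) {x y : Matrix (Fin n) (Fin n) ℝ} (hx : inM1 x) (hy : inM2 y) :
    f4 (x + y) = ⁅so2Gen hn, x⁆ + ⁅so2Gen hn, y⁆ := by
  rw [f4_eq_lie hn (inM_add hx hy).1, lie_add]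

lemma f4_eq_zero_of_inM3 (hn : 3 ≤ n) {Z : Matrix (Fin n) (Fin n) ℝ} (hZ : inM3 Z) :
    f4 Z = 0 := by
  rw [f4_eq_lie hn hZ.1, lie_so2Gen_of_inM3 hn hZ]

lemma nkDeviation_eq (hn : 3 ≤ n) {x y : Matrix (Fin n) (Fin n) ℝ} (hx : inM1 x) (hy : inM2 y)
    (a b c : ℝ) :
    (1 / 2 : ℝ) • pM (br (x + y) (f4 (x + y))) + symmU a b c (x + y) (f4 (x + y)) -
      f4 (symmU a b c (x + y) (x + y)) = ⁅x, ⁅so2Gen hn, y⁆⁆ := by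
  set J := so2Gen hn
  have hJx : inM1 ⁅J, x⁆ := inM1_lie (inH_so2Gen hn) hx
  have hJy : inM2 ⁅J, y⁆ := inM2_lie (inH_so2Gen hn) hy
  have hf : f4 (x + y) = ⁅J, x⁆ + ⁅J, y⁆ := f4_eq_lie_add_lie hn hx hy
  have hcancel : ⁅x, ⁅J, y⁆⁆ + ⁅⁅J, x⁆, y⁆ = 0 := by
    rw [add_comm, ← leibniz_lie, lie_so2Gen_of_inM3 hn (inM3_lie hx hy)]
  have hfU : f4 (symmU a b c (x + y) (x + y)) = 0 := by
    rw [symmU_add_add hx hy hx hy, ← two_smul ℝ ⁅x, y⁆, smul_smul]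
    exact f4_eq_zero_of_inM3 hn (SkewSupportedOn.smul (inM3_lie hx hy) _)
  rw [hfU, hf, symmU_add_add hx hy hJx hJy, hcancel, br_eq_lie, pM_lie_add_add hx hy hJx hJy,
    ← neg_eq_of_add_eq_zero_right hcancel]
  module

lemma exists_lie_lie_so2Gen_ne_zero (hn : 4 ≤ n) :
    ∃ x y : Matrix (Fin n) (Fin n) ℝ, inM1 x ∧ inM2 y ∧
      ⁅⁅so2Gen (Nat.le_of_succ_le hn), x⁆,
        ⁅so2Gen (Nat.le_of_succ_le hn), ⁅so2Gen (Nat.le_of_succ_le hn), y⁆⁆⁆ ≠ 0 := by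
  let e : Fin 4 → Fin n := Fin.castLE hn
  have he : Function.Injective e := Fin.castLE_injective hn
  have h01 : e 0 ≠ e 1 := he.ne (by decide)
  have h02 : e 0 ≠ e 2 := he.ne (by decide)
  have h03 : e 0 ≠ e 3 := he.ne (by decide)
  have h12 : e 1 ≠ e 2 := he.ne (by decide)
  have h13 : e 1 ≠ e 3 := he.ne (by decide)
  have h23 : e 2 ≠ e 3 := he.ne (by decide)
  have hJ : so2Gen (Nat.le_of_succ_le hn) = skewUnit ℝ (e 1) (e 2) := rfl
  refine ⟨skewUnit ℝ (e 0) (e 1), skewUnit ℝ (e 2) (e 3), inM1_skewUnit rfl (.inl rfl),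
    inM2_skewUnit (.inr rfl) le_rfl, fun h => ?_⟩
  rw [hJ, lie_skewUnit_skewUnit_swap h01 h12 h02, lie_skewUnit_skewUnit h12 h23 h13,
    lie_skewUnit_skewUnit_of_left h12 h23 h13,
    lie_skewUnit_skewUnit_swap h23.symm h02.symm h03.symm] at h
  have hone := skewUnit_apply_of_ne (R := ℝ) h03
  rw [h] at hone
  exact zero_ne_one hone

end InfinitesimalRotation

end FlagMfld

theorem statement18_general (n : ℕ) (hn : 4 ≤ n) :
    ∃ X : Matrix (Fin n) (Fin n) ℝ, inM X ∧ ∀ a b c : ℝ,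
      (1 / 2 : ℝ) • pM (br (f4 X) (f4 (f4 X))) + symmU a b c (f4 X) (f4 (f4 X)) -
        f4 (symmU a b c (f4 X) (f4 X)) ≠ 0 := by
  obtain ⟨x, y, hx, hy, hne⟩ := exists_lie_lie_so2Gen_ne_zero hn
  have hJ := inH_so2Gen (Nat.le_of_succ_le hn)
  refine ⟨x + y, inM_add hx hy, fun a b c => ?_⟩
  rwa [f4_eq_lie_add_lie (Nat.le_of_succ_le hn) hx hy,
    nkDeviation_eq _ (inM1_lie hJ hx) (inM2_lie hJ hy)]

/-- On the 6-symmetric space `SO(n)/SO(2)×SO(n-3)`, `f₄` is not a nearly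
Kähler f-structure for any `s, t > 0`: for every `s,t > 0` there is `X ∈ 𝔪` at which the
NKf condition fails. -/
theorem statement18 (n : ℕ) (hn : 4 ≤ n) (s t : ℝ) (hs : 0 < s) (ht : 0 < t) :
    ∃ X : Matrix (Fin n) (Fin n) ℝ, inM X ∧
      (1 / 2 : ℝ) • pM (br (f4 X) (f4 (f4 X))) + Ust s t (f4 X) (f4 (f4 X)) -
        f4 (Ust s t (f4 X) (f4 X)) ≠ 0 := by
  obtain ⟨X, hX, hne⟩ := statement18_general n hn
  exact ⟨X, hX, hne _ _ _⟩
end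

section
/- Consider SO(n)/SO(2)×SO(n−3) as a 6-symmetric space with canonical f-structures f₁, f₂, f₃, f₄. For every s, t > 0, each f ∈ {f₁, f₂, f₃, f₄} satisfies the G₁f condition for (s,t): f(2·U_{s,t}(fX, f²X) − f(U_{s,t}(fX, fX)) + f(U_{s,t}(f²X, f²X))) = 0 for all X ∈ 𝔪. In other words, f₁, f₂, f₃, f₄ are G₁f-structures with respect to every invariant Riemannian metric. -/
open Matrix

open FlagMfld

/-!
The automorphism `θ` acts on `𝔪₃` as `-1`, so `θ` agrees there with `θ⁵`, and `θ²` with `θ⁴`. Hence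
every combination `f` of `θ - θ⁵` and `θ² - θ⁴` kills `𝔪₃` and takes values with vanishing
`𝔪₃`-component. For such values only the `[𝔪₁, 𝔪₂]` terms of `U_{s,t}` survive, and
`[𝔪₁, 𝔪₂] ⊆ 𝔪₃` is killed by `f`.
-/

namespace FlagMfld

variable {n : ℕ}

/-- The block of the partition `{1}, {2, 3}, {4, …, n}` (1-based) that contains the index `i`;
the blocks are numbered `0, 1, 2`. -/
def blockIndex (i : Fin n) : Fin 3 :=
  if i.val = 0 then 0 else if i.val ≤ 2 then 1 else 2

/-- The orthogonal projection of `ℝⁿ` onto the coordinates of the `k`-th block. In terms of these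
projections, each `𝔪ᵢ`-component has the form `Pₖ X Pₗ + Pₗ X Pₖ` with `k ≠ l`. -/
def blockProj (k : Fin 3) : Matrix (Fin n) (Fin n) ℝ :=
  diagonal fun i => if blockIndex i = k then 1 else 0

lemma blockProj_transpose (k : Fin 3) : (blockProj k : Matrix (Fin n) (Fin n) ℝ)ᵀ = blockProj k :=
  diagonal_transpose _

lemma blockProj_mul_blockProj (k l : Fin 3) :
    (blockProj k * blockProj l : Matrix (Fin n) (Fin n) ℝ) = if k = l then blockProj k else 0 := by
  split_ifs with h
  · simp [blockProj, h]
  · rw [blockProj, blockProj, diagonal_mul_diagonal, diagonal_eq_zero]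
    funext i
    simp only [Pi.zero_apply]
    grind

lemma blockProj_mul_blockProj_mul (k l : Fin 3) (X : Matrix (Fin n) (Fin n) ℝ) :
    blockProj k * (blockProj l * X) = if k = l then blockProj k * X else 0 := by
  rw [← Matrix.mul_assoc, blockProj_mul_blockProj, ite_mul, Matrix.zero_mul]

lemma blockProj_mul_mul_blockProj_apply (k l : Fin 3) (X : Matrix (Fin n) (Fin n) ℝ)
    (i j : Fin n) :
    (blockProj k * X * blockProj l : Matrix (Fin n) (Fin n) ℝ) i j =
      if blockIndex i = k ∧ blockIndex j = l then X i j else 0 := by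
  simp only [blockProj, mul_diagonal, diagonal_mul]
  grind

lemma p1_eq_blockProj (X : Matrix (Fin n) (Fin n) ℝ) :
    p1 X = blockProj 0 * X * blockProj 1 + blockProj 1 * X * blockProj 0 := by
  ext i j
  simp only [p1, of_apply, Matrix.add_apply, blockProj_mul_mul_blockProj_apply, blockIndex]
  grind

lemma p2_eq_blockProj (X : Matrix (Fin n) (Fin n) ℝ) :
    p2 X = blockProj 1 * X * blockProj 2 + blockProj 2 * X * blockProj 1 := by
  ext i j
  simp only [p2, of_apply, Matrix.add_apply, blockProj_mul_mul_blockProj_apply, blockIndex]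
  grind

lemma p3_eq_blockProj (X : Matrix (Fin n) (Fin n) ℝ) :
    p3 X = blockProj 0 * X * blockProj 2 + blockProj 2 * X * blockProj 0 := by
  ext i j
  simp only [p3, of_apply, Matrix.add_apply, blockProj_mul_mul_blockProj_apply, blockIndex]
  grind

lemma p3_add_s19 (X Y : Matrix (Fin n) (Fin n) ℝ) : p3 (X + Y) = p3 X + p3 Y := by
  simp only [p3_eq_blockProj, mul_add, add_mul]
  abel

lemma p3_smul (c : ℝ) (X : Matrix (Fin n) (Fin n) ℝ) : p3 (c • X) = c • p3 X := by
  simp only [p3_eq_blockProj, mul_smul_comm, smul_mul_assoc, smul_add]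

lemma p3_sub (X Y : Matrix (Fin n) (Fin n) ℝ) : p3 (X - Y) = p3 X - p3 Y := by
  simp only [p3_eq_blockProj, mul_sub, sub_mul]
  abel

lemma br_p1_p2_eq_blockProj (X Y : Matrix (Fin n) (Fin n) ℝ) :
    br (p1 X) (p2 Y) =
      blockProj 0 * (X * blockProj 1 * Y) * blockProj 2 -
        blockProj 2 * (Y * blockProj 1 * X) * blockProj 0 := by
  simp [br, p1_eq_blockProj, p2_eq_blockProj, mul_add, add_mul, Matrix.mul_assoc,
    blockProj_mul_blockProj_mul]

lemma p3_blockProj_zero_mul_mul_blockProj_two (X : Matrix (Fin n) (Fin n) ℝ) :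
    p3 (blockProj 0 * X * blockProj 2) = blockProj 0 * X * blockProj 2 := by
  simp [p3_eq_blockProj, Matrix.mul_assoc, blockProj_mul_blockProj_mul, blockProj_mul_blockProj]

lemma p3_blockProj_two_mul_mul_blockProj_zero (X : Matrix (Fin n) (Fin n) ℝ) :
    p3 (blockProj 2 * X * blockProj 0) = blockProj 2 * X * blockProj 0 := by
  simp [p3_eq_blockProj, Matrix.mul_assoc, blockProj_mul_blockProj_mul, blockProj_mul_blockProj]

lemma p3_br_p1_p2 (X Y : Matrix (Fin n) (Fin n) ℝ) :
    p3 (br (p1 X) (p2 Y)) = br (p1 X) (p2 Y) := by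
  rw [br_p1_p2_eq_blockProj, p3_sub, p3_blockProj_zero_mul_mul_blockProj_two,
    p3_blockProj_two_mul_mul_blockProj_zero]

lemma Ust_of_p3_eq_zero (s t : ℝ) {X Y : Matrix (Fin n) (Fin n) ℝ} (hX : p3 X = 0)
    (hY : p3 Y = 0) :
    Ust s t X Y = ((s - 1) / (2 * t)) • (br (p1 X) (p2 Y) + br (p1 Y) (p2 X)) := by
  simp [Ust, br, hX, hY]

lemma p3_Ust_of_p3_eq_zero (s t : ℝ) {X Y : Matrix (Fin n) (Fin n) ℝ} (hX : p3 X = 0)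
    (hY : p3 Y = 0) : p3 (Ust s t X Y) = Ust s t X Y := by
  rw [Ust_of_p3_eq_zero s t hX hY, p3_smul, p3_add_s19, p3_br_p1_p2, p3_br_p1_p2]

theorem g1Cond_of_map_p3_of_p3_map (s t : ℝ)
    {f : Matrix (Fin n) (Fin n) ℝ → Matrix (Fin n) (Fin n) ℝ}
    (map_p3 : ∀ X, f (p3 X) = 0) (p3_map : ∀ X, p3 (f X) = 0) : g1Cond s t f := by
  intro X _
  have p3_U (Y Z) : p3 (Ust s t (f Y) (f Z)) = Ust s t (f Y) (f Z) :=
    p3_Ust_of_p3_eq_zero s t (p3_map Y) (p3_map Z)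
  have map_U (Y Z) : f (Ust s t (f Y) (f Z)) = 0 := by
    rw [← p3_U, map_p3]
  rw [map_U, map_U, sub_zero, add_zero, ← p3_U, ← p3_smul, map_p3]

lemma B6_mul_blockProj_zero : (B6 * blockProj 0 : Matrix (Fin n) (Fin n) ℝ) = blockProj 0 := by
  ext i j
  simp only [blockProj, mul_diagonal, diagonal_apply, B6, of_apply, blockIndex]
  grind

lemma blockProj_zero_mul_B6 : (blockProj 0 * B6 : Matrix (Fin n) (Fin n) ℝ) = blockProj 0 := by
  ext i j
  simp only [blockProj, diagonal_mul, diagonal_apply, B6, of_apply, blockIndex]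
  grind

lemma B6_mul_blockProj_two : (B6 * blockProj 2 : Matrix (Fin n) (Fin n) ℝ) = -blockProj 2 := by
  ext i j
  simp only [blockProj, mul_diagonal, diagonal_apply, B6, of_apply, blockIndex, Matrix.neg_apply]
  grind

lemma blockProj_two_mul_B6 : (blockProj 2 * B6 : Matrix (Fin n) (Fin n) ℝ) = -blockProj 2 := by
  ext i j
  simp only [blockProj, diagonal_mul, diagonal_apply, B6, of_apply, blockIndex, Matrix.neg_apply]
  grind

lemma th6_blockProj_mul_mul_blockProj (k l : Fin 3) (X : Matrix (Fin n) (Fin n) ℝ) :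
    th6 (blockProj k * X * blockProj l) = (B6 * blockProj k) * X * (B6 * blockProj l)ᵀ := by
  simp only [th6, transpose_mul, blockProj_transpose, Matrix.mul_assoc]

lemma blockProj_mul_th6_mul_blockProj (k l : Fin 3) (X : Matrix (Fin n) (Fin n) ℝ) :
    blockProj k * th6 X * blockProj l = (blockProj k * B6) * X * (blockProj l * B6)ᵀ := by
  simp only [th6, transpose_mul, blockProj_transpose, Matrix.mul_assoc]

lemma th6_add (X Y : Matrix (Fin n) (Fin n) ℝ) : th6 (X + Y) = th6 X + th6 Y := by
  simp only [th6, mul_add, add_mul]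

lemma th6_smul (c : ℝ) (X : Matrix (Fin n) (Fin n) ℝ) : th6 (c • X) = c • th6 X := by
  simp only [th6, mul_smul_comm, smul_mul_assoc]

lemma th6_p3 (X : Matrix (Fin n) (Fin n) ℝ) : th6 (p3 X) = -p3 X := by
  simp only [p3_eq_blockProj, th6_add, th6_blockProj_mul_mul_blockProj, B6_mul_blockProj_zero,
    B6_mul_blockProj_two, transpose_neg, blockProj_transpose, mul_neg, neg_mul, neg_add]

lemma p3_th6 (X : Matrix (Fin n) (Fin n) ℝ) : p3 (th6 X) = -p3 X := by
  simp only [p3_eq_blockProj, blockProj_mul_th6_mul_blockProj, blockProj_zero_mul_B6,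
    blockProj_two_mul_B6, transpose_neg, blockProj_transpose, mul_neg, neg_mul, neg_add]

lemma iterate_th6_p3 (m : ℕ) (X : Matrix (Fin n) (Fin n) ℝ) :
    th6^[m] (p3 X) = (-1 : ℝ) ^ m • p3 X := by
  induction m with
  | zero => simp
  | succ m ih => rw [Function.iterate_succ_apply', ih, th6_smul, th6_p3]; module

lemma p3_iterate_th6 (m : ℕ) (X : Matrix (Fin n) (Fin n) ℝ) :
    p3 (th6^[m] X) = (-1 : ℝ) ^ m • p3 X := by
  induction m with
  | zero => simp
  | succ m ih => rw [Function.iterate_succ_apply', p3_th6, ih]; module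

/-- The general odd polynomial `a (θ - θ⁵) + b (θ² - θ⁴)` in the automorphism `θ` of order `6`
(odd with respect to `θ ↦ θ⁻¹`). The canonical f-structures are the members `f₁, …, f₄` of this
family. -/
noncomputable def oddThetaPoly (a b : ℝ) (X : Matrix (Fin n) (Fin n) ℝ) :
    Matrix (Fin n) (Fin n) ℝ :=
  a • (th6^[1] X - th6^[5] X) + b • (th6^[2] X - th6^[4] X)

lemma oddThetaPoly_p3 (a b : ℝ) (X : Matrix (Fin n) (Fin n) ℝ) :
    oddThetaPoly a b (p3 X) = 0 := by
  simp only [oddThetaPoly, iterate_th6_p3]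
  module

lemma p3_oddThetaPoly (a b : ℝ) (X : Matrix (Fin n) (Fin n) ℝ) :
    p3 (oddThetaPoly a b X) = 0 := by
  simp only [oddThetaPoly, p3_add_s19, p3_sub, p3_smul, p3_iterate_th6]
  module

lemma f1_eq_oddThetaPoly : f1 (n := n) = oddThetaPoly (1 / √3) 0 := by
  funext X
  simp [f1, oddThetaPoly]

lemma f2_eq_oddThetaPoly : f2 (n := n) = oddThetaPoly (1 / (2 * √3)) (-(1 / (2 * √3))) := by
  funext X
  simp only [f2, oddThetaPoly, Function.iterate_succ_apply, Function.iterate_zero_apply]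
  module

lemma f3_eq_oddThetaPoly : f3 (n := n) = oddThetaPoly (1 / (2 * √3)) (1 / (2 * √3)) := by
  funext X
  simp only [f3, oddThetaPoly, Function.iterate_succ_apply, Function.iterate_zero_apply]
  module

lemma f4_eq_oddThetaPoly : f4 (n := n) = oddThetaPoly 0 (1 / √3) := by
  funext X
  simp [f4, oddThetaPoly]

end FlagMfld

theorem statement19_general (n : ℕ) (s t : ℝ) (hs : s ≠ 0) (ht : t ≠ 0) (a b : ℝ) :
    g1Cond (n := n) s t (oddThetaPoly a b) :=
  g1Cond_of_map_p3_of_p3_map s t (oddThetaPoly_p3 a b) (p3_oddThetaPoly a b)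

/-- On the 6-symmetric space `SO(n)/SO(2)×SO(n-3)`, each of
`f₁, f₂, f₃, f₄` is a `G₁f`-structure with respect to every invariant Riemannian metric. -/
theorem statement19 (n : ℕ) (hn : 4 ≤ n) (s t : ℝ) (hs : 0 < s) (ht : 0 < t) :
    g1Cond (n := n) s t f1 ∧
    g1Cond (n := n) s t f2 ∧
    g1Cond (n := n) s t f3 ∧
    g1Cond (n := n) s t f4 := by
  have g1 := statement19_general n s t hs.ne' ht.ne'
  rw [f1_eq_oddThetaPoly, f2_eq_oddThetaPoly, f3_eq_oddThetaPoly, f4_eq_oddThetaPoly]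
  exact ⟨g1 _ _, g1 _ _, g1 _ _, g1 _ _⟩
end
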